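/- Let Ω ⊆ ℝⁿ be open, κ > 0, and let u,v be smooth functions on Ω satisfying Δu = κ u v² and Δv = κ v u² on Ω. Then for every smooth vector field Y with compact support in Ω, the stationary condition holds: ∫_Ω [ (|∇u|² + |∇v|² + κ u² v²) div Y − 2 DY(∇u,∇u) − 2 DY(∇v,∇v) ] dx = 0. -/

import Mathlib

/-!
The identity is the domain-variation form of the Euler–Lagrange equations of the energy density
`F = |∇u|² + |∇v|² + κ u² v²`. Consider the compactly supported vector field
`W = F Y - 2 (Y · ∇u) ∇u - 2 (Y · ∇v) ∇v`. Expanding its divergence, the Hessian terms cancel by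
symmetry of second derivatives (`sum_fderiv_stressField`), and what remains beyond the integrand is
`2 (Y · ∇u) (κ u v² - Δu) + 2 (Y · ∇v) (κ v u² - Δv)`, which vanishes by the two equations. So the
integrand is `div W`, whose integral is zero (`integral_fderiv_apply_eq_zero`).

Since `u` and `v` are only regular on `Ω`, the regularity of `W` is checked separately at points of
`Ω` and at points outside `tsupport Y`, near which `W` vanishes identically.
-/

open MeasureTheory Metric Set
open scoped RealInnerProductSpace ENNReal

/-- Euclidean space `ℝⁿ`. -/
abbrev Euc (n : ℕ) := EuclideanSpace ℝ (Fin n)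

/-- The Laplacian `Δu` of a function `u : ℝⁿ → ℝ`. -/
noncomputable def lap {n : ℕ} (u : Euc n → ℝ) (x : Euc n) : ℝ :=
  ∑ i : Fin n,
    fderiv ℝ (fun y => fderiv ℝ u y (EuclideanSpace.single i 1)) x (EuclideanSpace.single i 1)

/-- The divergence `div Y = Σ_α ∂Y^α/∂x_α` of a vector field `Y`. -/
noncomputable def vdiv {n : ℕ} (Y : Euc n → Euc n) (x : Euc n) : ℝ :=
  ∑ i : Fin n, fderiv ℝ Y x (EuclideanSpace.single i 1) i

/-- `DY(p,q)(x) = Σ_{α,β} (∂Y^α/∂x_β)(x) p_α q_β`. -/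
noncomputable def DYbil {n : ℕ} (Y : Euc n → Euc n) (p q x : Euc n) : ℝ :=
  ∑ α : Fin n, ∑ β : Fin n,
    fderiv ℝ Y x (EuclideanSpace.single β 1) α * p α * q β

/-- The rescaled function `u_κ(x) = R⁻¹ u(x₀ + R x)` (with `κ = R⁴`). -/
noncomputable def resc {n : ℕ} (u : Euc n → ℝ) (x₀ : Euc n) (R : ℝ) (x : Euc n) : ℝ :=
  R⁻¹ * u (x₀ + R • x)

/-- The partial derivative `∂ⱼu`. -/
noncomputable def pd {n : ℕ} (u : Euc n → ℝ) (j : Fin n) (x : Euc n) : ℝ :=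
  fderiv ℝ u x (EuclideanSpace.single j 1)

/-- The `i`-th component of the vector field `|∇u|² Y - 2 (Y · ∇u) ∇u`. -/
noncomputable def stressField {n : ℕ} (u : Euc n → ℝ) (Y : Euc n → Euc n) (i : Fin n)
    (x : Euc n) : ℝ :=
  (∑ j, pd u j x ^ 2) * Y x i - 2 * (∑ j, Y x j * pd u j x) * pd u i x

lemma contDiffAt_pd {n : ℕ} {u : Euc n → ℝ} {x : Euc n}
    (hu : ContDiffAt ℝ (⊤ : ℕ∞) u x) (j : Fin n) : ContDiffAt ℝ 1 (pd u j) x := by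
  have h : ContDiffAt ℝ 1 (fderiv ℝ u) x :=
    hu.fderiv_right (m := 1) (by norm_cast)
  exact h.clm_apply contDiffAt_const

lemma fderiv_pd_symm {n : ℕ} {u : Euc n → ℝ} {x : Euc n}
    (hu : ContDiffAt ℝ (⊤ : ℕ∞) u x) (i j : Fin n) :
    fderiv ℝ (pd u j) x (EuclideanSpace.single i 1) =
      fderiv ℝ (pd u i) x (EuclideanSpace.single j 1) := by
  have h : DifferentiableAt ℝ (fderiv ℝ u) x :=
    (hu.fderiv_right (m := 1) (by norm_cast)).differentiableAt (by norm_num)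
  have hs : IsSymmSndFDerivAt ℝ u x := hu.isSymmSndFDerivAt (by
    rw [minSmoothness_of_isRCLikeNormedField]; norm_cast)
  have key (k : Fin n) (w : Euc n) : fderiv ℝ (pd u k) x w =
      fderiv ℝ (fderiv ℝ u) x w (EuclideanSpace.single k 1) := by
    have := h.hasFDerivAt.clm_apply
      (hasFDerivAt_const (EuclideanSpace.single k (1 : ℝ) : Euc n) x)
    have h2 : HasFDerivAt (pd u k) _ x := this
    rw [h2.fderiv]
    simp
  rw [key, key]
  exact hs _ _

lemma hasFDerivAt_comp {n : ℕ} {Y : Euc n → Euc n} {x : Euc n}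
    (hY : DifferentiableAt ℝ Y x) (i : Fin n) :
    HasFDerivAt (fun y => Y y i)
      ((EuclideanSpace.proj i : Euc n →L[ℝ] ℝ).comp (fderiv ℝ Y x)) x :=
  (EuclideanSpace.proj i : Euc n →L[ℝ] ℝ).hasFDerivAt.comp x hY.hasFDerivAt

lemma contDiffAt_comp {n : ℕ} {Y : Euc n → Euc n} (hY : ContDiff ℝ (⊤ : ℕ∞) Y) (x : Euc n)
    (i : Fin n) : ContDiffAt ℝ 1 (fun y => Y y i) x := by
  have h : ContDiffAt ℝ 1 Y x := hY.contDiffAt.of_le (by norm_cast)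
  exact (EuclideanSpace.proj i : Euc n →L[ℝ] ℝ).contDiff.contDiffAt.comp x h

lemma contDiffAt_stressField {n : ℕ} {u : Euc n → ℝ} {Y : Euc n → Euc n} {x : Euc n}
    (hu : ContDiffAt ℝ (⊤ : ℕ∞) u x) (hY : ContDiff ℝ (⊤ : ℕ∞) Y) (i : Fin n) :
    ContDiffAt ℝ 1 (stressField u Y i) x := by
  have h1 := contDiffAt_pd hu
  have h2 := contDiffAt_comp hY x
  unfold stressField
  exact ((ContDiffAt.sum fun j _ => (h1 j).pow 2).mul (h2 i)).sub
    ((contDiffAt_const.mul (ContDiffAt.sum fun j _ => (h2 j).mul (h1 j))).mul (h1 i))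

/-- The divergence of `|∇u|² Y - 2 (Y · ∇u) ∇u`. The Hessian contributions `2 D²u(∇u, Y)` of the
two terms cancel by symmetry of the second derivative. -/
lemma sum_fderiv_stressField {n : ℕ} {u : Euc n → ℝ} {Y : Euc n → Euc n} {x : Euc n}
    (hu : ContDiffAt ℝ (⊤ : ℕ∞) u x) (hY : ContDiff ℝ (⊤ : ℕ∞) Y) :
    ∑ i, fderiv ℝ (stressField u Y i) x (EuclideanSpace.single i 1) =
      (∑ j, pd u j x ^ 2) * vdiv Y x
        - 2 * (∑ i, ∑ j, fderiv ℝ Y x (EuclideanSpace.single j 1) i * pd u i x * pd u j x)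
        - 2 * (∑ j, Y x j * pd u j x) * lap u x := by
  have h1 (j) : HasFDerivAt (pd u j) (fderiv ℝ (pd u j) x) x :=
    ((contDiffAt_pd hu j).differentiableAt (by norm_num)).hasFDerivAt
  have h2 := hasFDerivAt_comp (hY.contDiffAt.differentiableAt (x := x) (by simp))
  have hd (i : Fin n) : fderiv ℝ (stressField u Y i) x (EuclideanSpace.single i 1) =
      (∑ j, pd u j x ^ 2) * fderiv ℝ Y x (EuclideanSpace.single i 1) i
      + Y x i * (∑ j, 2 * pd u j x * fderiv ℝ (pd u j) x (EuclideanSpace.single i 1))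
      - 2 * (∑ j, Y x j * pd u j x) * fderiv ℝ (pd u i) x (EuclideanSpace.single i 1)
      - 2 * pd u i x * ∑ j, (Y x j * fderiv ℝ (pd u j) x (EuclideanSpace.single i 1)
        + pd u j x * fderiv ℝ Y x (EuclideanSpace.single i 1) j) := by
    have H := ((HasFDerivAt.fun_sum (u := Finset.univ) fun j _ => (h1 j).pow 2).mul (h2 i)).sub
      (((HasFDerivAt.fun_sum (u := Finset.univ) fun j _ => (h2 j).mul (h1 j)).const_mul 2).mul
        (h1 i))
    have H' : HasFDerivAt (stressField u Y i) _ x := H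
    rw [H'.fderiv]
    simp [Finset.mul_sum]
    ring_nf
  have hlap : lap u x = ∑ i, fderiv ℝ (pd u i) x (EuclideanSpace.single i 1) := rfl
  simp_rw [hd, fderiv_pd_symm hu, hlap, vdiv]
  simp only [Finset.sum_add_distrib, Finset.sum_sub_distrib, mul_add, ← Finset.mul_sum]
  have e1 : ∑ i, Y x i * ∑ j, 2 * pd u j x * fderiv ℝ (pd u i) x (EuclideanSpace.single j 1)
      = ∑ i, 2 * pd u i x * ∑ j, Y x j * fderiv ℝ (pd u i) x (EuclideanSpace.single j 1) := by
    simp_rw [Finset.mul_sum]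
    rw [Finset.sum_comm]
    refine Finset.sum_congr rfl fun i _ => Finset.sum_congr rfl fun j _ => ?_
    rw [fderiv_pd_symm hu]
    ring
  have e2 : ∑ i, 2 * pd u i x * ∑ j, pd u j x * fderiv ℝ Y x (EuclideanSpace.single i 1) j
      = 2 * ∑ i, ∑ j, fderiv ℝ Y x (EuclideanSpace.single j 1) i * pd u i x * pd u j x := by
    simp_rw [Finset.mul_sum]
    rw [Finset.sum_comm]
    refine Finset.sum_congr rfl fun i _ => Finset.sum_congr rfl fun j _ => ?_
    ring
  rw [e1, e2]
  ring

lemma gradient_apply {n : ℕ} (u : Euc n → ℝ) (x : Euc n) (j : Fin n) :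
    gradient u x j = pd u j x := by
  have h : inner ℝ (gradient u x) (EuclideanSpace.single j (1 : ℝ)) = pd u j x := by
    simp [gradient, pd]
  rw [← h, EuclideanSpace.inner_single_right]
  simp

/-- The divergence of the potential part `κ u² v² Y` of the field. -/
lemma sum_fderiv_potential {n : ℕ} {u v : Euc n → ℝ} {Y : Euc n → Euc n} {x : Euc n} (κ : ℝ)
    (hu : DifferentiableAt ℝ u x) (hv : DifferentiableAt ℝ v x) (hY : DifferentiableAt ℝ Y x) :
    ∑ i, fderiv ℝ (fun y => κ * u y ^ 2 * v y ^ 2 * Y y i) x (EuclideanSpace.single i 1) =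
      κ * u x ^ 2 * v x ^ 2 * vdiv Y x
        + 2 * κ * u x * v x ^ 2 * (∑ j, Y x j * pd u j x)
        + 2 * κ * v x * u x ^ 2 * (∑ j, Y x j * pd v j x) := by
  simp_rw [vdiv, Finset.mul_sum, ← Finset.sum_add_distrib]
  refine Finset.sum_congr rfl fun i _ => ?_
  have H := (((hu.hasFDerivAt.pow 2).const_mul κ).mul (hv.hasFDerivAt.pow 2)).mul
    (hasFDerivAt_comp hY i)
  have H' : HasFDerivAt (fun y => κ * u y ^ 2 * v y ^ 2 * Y y i) _ x := H
  rw [H'.fderiv]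
  simp [pd]
  ring

lemma integral_fderiv_apply_eq_zero {n : ℕ} {g : Euc n → ℝ} (hg : ContDiff ℝ 1 g)
    (hc : HasCompactSupport g) (w : Euc n) :
    Integrable (fun x => fderiv ℝ g x w) ∧ ∫ x, fderiv ℝ g x w = 0 := by
  have hi : Integrable (fun x => fderiv ℝ g x w) :=
    ((hg.continuous_fderiv (by norm_num)).clm_apply continuous_const).integrable_of_hasCompactSupport
      (hc.fderiv_apply ℝ w)
  refine ⟨hi, ?_⟩
  -- Integration by parts against the constant function `1`.
  have := integral_mul_fderiv_eq_neg_fderiv_mul_of_integrable (μ := volume)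
    (f := fun _ : Euc n => (1 : ℝ)) (g := g) (v := w) (by simp) (by simpa using hi)
    (by simpa using hg.continuous.integrable_of_hasCompactSupport hc)
    (fun _ _ => differentiableAt_const _)
    (fun _ _ => hg.differentiable (by norm_num) _)
  simpa using this

theorem stationary_condition (n : ℕ) (hn : 2 ≤ n)
    (Ω : Set (Euc n)) (hΩ : IsOpen Ω)
    (κ : ℝ) (hκ : 0 < κ)
    (u v : Euc n → ℝ)
    (hu : ContDiffOn ℝ (⊤ : ℕ∞) u Ω) (hv : ContDiffOn ℝ (⊤ : ℕ∞) v Ω)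
    (hequ : ∀ x ∈ Ω, lap u x = κ * u x * v x ^ 2)
    (heqv : ∀ x ∈ Ω, lap v x = κ * v x * u x ^ 2)
    (Y : Euc n → Euc n)
    (hY : ContDiff ℝ (⊤ : ℕ∞) Y) (hYc : HasCompactSupport Y) (hYΩ : tsupport Y ⊆ Ω) :
    ∫ x in Ω,
      ((‖gradient u x‖ ^ 2 + ‖gradient v x‖ ^ 2 + κ * u x ^ 2 * v x ^ 2) * vdiv Y x
        - 2 * DYbil Y (gradient u x) (gradient u x) x
        - 2 * DYbil Y (gradient v x) (gradient v x) x) = 0 := by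
  have hux {x} (hx : x ∈ Ω) : ContDiffAt ℝ (⊤ : ℕ∞) u x := hu.contDiffAt (hΩ.mem_nhds hx)
  have hvx {x} (hx : x ∈ Ω) : ContDiffAt ℝ (⊤ : ℕ∞) v x := hv.contDiffAt (hΩ.mem_nhds hx)
  let P : Fin n → Euc n → ℝ := fun i y => κ * u y ^ 2 * v y ^ 2 * Y y i
  let W : Fin n → Euc n → ℝ := fun i y => stressField u Y i y + stressField v Y i y + P i y
  have hP {x} (hx : x ∈ Ω) (i) : ContDiffAt ℝ 1 (P i) x :=
    (((contDiffAt_const.mul (((hux hx).of_le (by norm_cast)).pow 2)).mul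
      (((hvx hx).of_le (by norm_cast)).pow 2)).mul (contDiffAt_comp hY x i))
  have hW0 (i) (x) (hx : Y x = 0) : W i x = 0 := by
    simp [W, P, stressField, hx]
  have hWc (i) : HasCompactSupport (W i) :=
    hYc.mono fun x hx hYx => hx (hW0 i x hYx)
  have hWs (i) : ContDiff ℝ 1 (W i) := by
    rw [contDiff_iff_contDiffAt]
    intro x
    by_cases hx : x ∈ tsupport Y
    · have hx := hYΩ hx
      exact ((contDiffAt_stressField (hux hx) hY i).add
        (contDiffAt_stressField (hvx hx) hY i)).add (hP hx i)
    · have h : W i =ᶠ[nhds x] fun _ => 0 := by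
        filter_upwards [notMem_tsupport_iff_eventuallyEq.mp hx] with y hy
        exact hW0 i y hy
      exact contDiffAt_const.congr_of_eventuallyEq h
  -- On `Ω` the integrand is the divergence of `W`.
  have hdiv : ∀ x ∈ Ω,
      ((‖gradient u x‖ ^ 2 + ‖gradient v x‖ ^ 2 + κ * u x ^ 2 * v x ^ 2) * vdiv Y x
        - 2 * DYbil Y (gradient u x) (gradient u x) x
        - 2 * DYbil Y (gradient v x) (gradient v x) x) =
      ∑ i, fderiv ℝ (W i) x (EuclideanSpace.single i 1) := by
    intro x hx
    have hsum (i) : fderiv ℝ (W i) x (EuclideanSpace.single i 1) =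
        fderiv ℝ (stressField u Y i) x (EuclideanSpace.single i 1)
        + fderiv ℝ (stressField v Y i) x (EuclideanSpace.single i 1)
        + fderiv ℝ (P i) x (EuclideanSpace.single i 1) := by
      have H := (((contDiffAt_stressField (hux hx) hY i).differentiableAt
        (by norm_num)).hasFDerivAt.add ((contDiffAt_stressField (hvx hx) hY i).differentiableAt
        (by norm_num)).hasFDerivAt).add ((hP hx i).differentiableAt (by norm_num)).hasFDerivAt
      have H' : HasFDerivAt (W i) _ x := H
      rw [H'.fderiv]
      simp
    simp_rw [hsum, Finset.sum_add_distrib]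
    rw [sum_fderiv_stressField (hux hx) hY, sum_fderiv_stressField (hvx hx) hY,
      sum_fderiv_potential κ ((hux hx).differentiableAt (by simp))
        ((hvx hx).differentiableAt (by simp)) (hY.contDiffAt.differentiableAt (by simp)),
      hequ x hx, heqv x hx]
    simp only [EuclideanSpace.norm_sq_eq, DYbil, gradient_apply, Real.norm_eq_abs, sq_abs]
    ring
  rw [setIntegral_congr_fun hΩ.measurableSet hdiv, setIntegral_eq_integral_of_forall_compl_eq_zero]
  · rw [integral_finsetSum _ fun i _ => (integral_fderiv_apply_eq_zero (hWs i) (hWc i) _).1]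
    exact Finset.sum_eq_zero fun i _ => (integral_fderiv_apply_eq_zero (hWs i) (hWc i) _).2
  · intro x hx
    refine Finset.sum_eq_zero fun i _ => ?_
    have h : W i =ᶠ[nhds x] fun _ => 0 := by
      filter_upwards [notMem_tsupport_iff_eventuallyEq.mp fun h => hx (hYΩ h)] with y hy
      exact hW0 i y hy
    rw [h.fderiv_eq]
    simp
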